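/- Let n ≥ m ≥ k ≥ 1 and p ≥ 1 be integers, and let B_1, …, B_p be m×n complex matrices each satisfying B_i B_i* = I_m. Then for every real ε > 0, the minimum over all k-element subsets s of {1,…,n} of (1/(n·p)) · ∑_{i=1}^{p} log det(ε·I_k + (B_i)_s* (B_i)_s) is at most (1/n)·log C(m,k) − (1/n)·log C(n,k) + 2√ε. -/

import Mathlib

open Matrix Finset

/-- The `m × k` submatrix of an `m × n` matrix `B` consisting of the columns of `B`
indexed by the subset `s`. -/
def colSubmatrix {m n : ℕ} (B : Matrix (Fin m) (Fin n) ℂ) (s : Finset (Fin n)) :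
    Matrix (Fin m) {j // j ∈ s} ℂ :=
  Matrix.of fun i j => B i (j : Fin n)

open Polynomial in
/-- Shifting a matrix by a scalar shifts its characteristic polynomial; this is the resulting
formula for the sum of the principal minors of a given size. -/
theorem sum_principal_minors_scalar_add {R : Type*} [CommRing R] [Nontrivial R] {n k : ℕ}
    (hkn : k ≤ n) (P : Matrix (Fin n) (Fin n) R) (e : R) :
    ∑ s ∈ Finset.univ.powersetCard k,
        ((e • (1 : Matrix (Fin n) (Fin n) R) + P).submatrix
          (Subtype.val : {j // j ∈ s} → Fin n) Subtype.val).det =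
      (-1) ^ k * ∑ i ∈ Finset.range (k + 1),
        ((i + (n - k)).choose (n - k) : R) * P.charpoly.coeff (i + (n - k)) * (-e) ^ i := by
  have hchar : (e • (1 : Matrix (Fin n) (Fin n) R) + P).charpoly = taylor (-e) P.charpoly := by
    rw [taylor_apply, ← charpoly_sub_scalar, add_comm]
    congr 1
    rw [map_neg, sub_neg_eq_add, scalar_apply, smul_one_eq_diagonal]
  have hdeg : (hasseDeriv (n - k) P.charpoly).natDegree < k + 1 := by
    have h := natDegree_hasseDeriv_le P.charpoly (n - k)
    rw [charpoly_natDegree_eq_dim, Fintype.card_fin] at h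
    omega
  have hminors := charpoly_coeff_eq_sum_minors (e • (1 : Matrix (Fin n) (Fin n) R) + P) k
    (by simpa using hkn)
  rw [hchar, Fintype.card_fin, taylor_coeff, eval_eq_sum_range' hdeg] at hminors
  simp_rw [hasseDeriv_coeff] at hminors
  rw [hminors, ← mul_assoc, ← mul_pow]
  simp

open Polynomial in
/-- The characteristic polynomial of the projection `Bᴴ B` onto the row space of a matrix with
orthonormal rows. -/
theorem charpoly_conjTranspose_mul_self_of_mul_conjTranspose {m n : ℕ} (hmn : m ≤ n)
    {B : Matrix (Fin m) (Fin n) ℂ} (hB : B * Bᴴ = 1) :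
    (Bᴴ * B).charpoly = X ^ (n - m) * (X + C (-1)) ^ m := by
  rw [charpoly_mul_comm_of_le _ _ (by simpa using hmn), hB]
  have hone : (1 : Matrix (Fin m) (Fin m) ℂ) = 0 - scalar (Fin m) (-1) := by simp
  rw [hone, charpoly_sub_scalar]
  simp

theorem conjTranspose_colSubmatrix_mul_self {m n : ℕ} (B : Matrix (Fin m) (Fin n) ℂ)
    (s : Finset (Fin n)) (e : ℂ) :
    e • 1 + (colSubmatrix B s)ᴴ * colSubmatrix B s =
      (e • (1 : Matrix (Fin n) (Fin n) ℂ) + Bᴴ * B).submatrix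
        (Subtype.val : {j // j ∈ s} → Fin n) Subtype.val := by
  ext i j
  simp only [colSubmatrix, Matrix.add_apply, Matrix.smul_apply, Matrix.mul_apply,
    Matrix.one_apply, conjTranspose_apply, of_apply, submatrix_apply, Subtype.ext_iff]

open scoped ComplexOrder in
theorem det_scalar_add_gram_colSubmatrix_re_pos {m n : ℕ} (B : Matrix (Fin m) (Fin n) ℂ)
    (s : Finset (Fin n)) {ε : ℝ} (hε : 0 < ε) :
    0 < (((ε : ℂ) • 1 + (colSubmatrix B s)ᴴ * colSubmatrix B s).det).re := by
  have hpos : ((ε : ℂ) • 1 + (colSubmatrix B s)ᴴ * colSubmatrix B s).PosDef :=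
    (PosDef.one.smul (by exact_mod_cast hε)).add_posSemidef
      (posSemidef_conjTranspose_mul_self _)
  exact (Complex.lt_def.mp hpos.det_pos).1

theorem sum_det_scalar_add_gram_colSubmatrix {m n k : ℕ} (hkm : k ≤ m) (hmn : m ≤ n)
    {B : Matrix (Fin m) (Fin n) ℂ} (hB : B * Bᴴ = 1) (ε : ℝ) :
    ∑ s ∈ Finset.univ.powersetCard k,
        (((ε : ℂ) • 1 + (colSubmatrix B s)ᴴ * colSubmatrix B s).det).re =
      ∑ i ∈ Finset.range (k + 1),
        ((n - k + i).choose i : ℝ) * (m.choose (k - i) : ℝ) * ε ^ i := by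
  rw [← Complex.re_sum]
  simp_rw [conjTranspose_colSubmatrix_mul_self]
  rw [sum_principal_minors_scalar_add (hkm.trans hmn),
    charpoly_conjTranspose_mul_self_of_mul_conjTranspose hmn hB, ← Complex.ofReal_re
      (∑ i ∈ Finset.range (k + 1), ((n - k + i).choose i : ℝ) * (m.choose (k - i) : ℝ) * ε ^ i)]
  congr 1
  push_cast
  rw [Finset.mul_sum]
  refine Finset.sum_congr rfl fun i hi => ?_
  have hik : i ≤ k := by simpa [Nat.lt_succ_iff] using hi
  rw [Polynomial.coeff_X_pow_mul', if_pos (by omega), Polynomial.coeff_X_add_C_pow,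
    show m - (i + (n - k) - (n - m)) = k - i by omega,
    show (i + (n - k) - (n - m)) = m - (k - i) by omega, Nat.choose_symm (by omega),
    add_comm i (n - k), Nat.choose_symm_add, neg_pow (ε : ℂ)]
  have hsign : (-1 : ℂ) ^ k * (-1) ^ (k - i) * (-1) ^ i = 1 := by
    rw [mul_assoc, ← pow_add, Nat.sub_add_cancel hik, ← mul_pow]
    simp
  linear_combination
    ((n - k + i).choose i : ℂ) * (m.choose (k - i) : ℂ) * (ε : ℂ) ^ i * hsign

theorem choose_mul_choose_sub_le {n m k i : ℕ} (hik : i ≤ k) (hkm : k ≤ m) (hmn : m ≤ n) :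
    ((n - k + i).choose i : ℝ) * (m.choose (k - i) : ℝ) ≤
      m.choose k * ((n : ℝ) ^ i / i.factorial) ^ 2 := by
  have hleft : ((n - k + i).choose i : ℝ) ≤ (n : ℝ) ^ i / i.factorial :=
    le_trans (by exact_mod_cast Nat.choose_le_choose i (by omega))
      (Nat.choose_le_pow_div (α := ℝ) i n)
  have hmul : m.choose (k - i) ≤ m.choose k * k.choose i := by
    rw [← Nat.choose_symm hik, Nat.choose_mul (Nat.sub_le k i)]
    exact Nat.le_mul_of_pos_right _ (Nat.choose_pos (by omega))
  have hright : (m.choose (k - i) : ℝ) ≤ m.choose k * ((n : ℝ) ^ i / i.factorial) := by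
    have hki : (k.choose i : ℝ) ≤ (n : ℝ) ^ i / i.factorial :=
      le_trans (by exact_mod_cast Nat.choose_le_choose i (hkm.trans hmn))
        (Nat.choose_le_pow_div (α := ℝ) i n)
    calc (m.choose (k - i) : ℝ) ≤ m.choose k * k.choose i := by exact_mod_cast hmul
      _ ≤ _ := by gcongr
  calc ((n - k + i).choose i : ℝ) * (m.choose (k - i) : ℝ)
      ≤ ((n : ℝ) ^ i / i.factorial) * (m.choose k * ((n : ℝ) ^ i / i.factorial)) := by gcongr
    _ = _ := by ring

theorem sum_det_scalar_add_gram_colSubmatrix_le {m n k : ℕ} (hkm : k ≤ m) (hmn : m ≤ n)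
    {B : Matrix (Fin m) (Fin n) ℂ} (hB : B * Bᴴ = 1) {ε : ℝ} (hε : 0 ≤ ε) :
    ∑ s ∈ Finset.univ.powersetCard k,
        (((ε : ℂ) • 1 + (colSubmatrix B s)ᴴ * colSubmatrix B s).det).re ≤
      m.choose k * Real.exp (2 * n * √ε) := by
  rw [sum_det_scalar_add_gram_colSubmatrix hkm hmn hB]
  calc ∑ i ∈ Finset.range (k + 1),
        ((n - k + i).choose i : ℝ) * (m.choose (k - i) : ℝ) * ε ^ i
      ≤ ∑ i ∈ Finset.range (k + 1),
          (m.choose k : ℝ) * ((n * √ε) ^ i / i.factorial) ^ 2 := by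
        refine Finset.sum_le_sum fun i hi => ?_
        have hik : i ≤ k := by simpa [Nat.lt_succ_iff] using hi
        refine (mul_le_mul_of_nonneg_right (choose_mul_choose_sub_le hik hkm hmn)
          (pow_nonneg hε i)).trans_eq ?_
        conv_lhs => rw [← Real.sq_sqrt hε]
        ring
    _ = m.choose k * ∑ i ∈ Finset.range (k + 1), ((n * √ε) ^ i / i.factorial) ^ 2 :=
        (Finset.mul_sum _ _ _).symm
    _ ≤ m.choose k * (∑ i ∈ Finset.range (k + 1), (n * √ε) ^ i / i.factorial) ^ 2 := by
        gcongr
        exact Finset.sum_sq_le_sq_sum_of_nonneg fun i _ => by positivity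
    _ ≤ m.choose k * Real.exp (n * √ε) ^ 2 := by
        gcongr
        exact Real.sum_le_exp_of_nonneg (by positivity) _
    _ = m.choose k * Real.exp (2 * n * √ε) := by
        rw [← Real.exp_nat_mul]
        push_cast
        ring_nf

/-- Concavity of the logarithm: if the mean of positive numbers is at most `c`, then the mean of
their logarithms is at most `log c`. -/
theorem sum_log_le_card_mul_log {ι : Type*} (t : Finset ι) (d : ι → ℝ) {c : ℝ} (hc : 0 < c)
    (hd : ∀ s ∈ t, 0 < d s) (hsum : ∑ s ∈ t, d s ≤ #t * c) :
    ∑ s ∈ t, Real.log (d s) ≤ #t * Real.log c := by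
  calc ∑ s ∈ t, Real.log (d s) ≤ ∑ s ∈ t, (Real.log c + (d s / c - 1)) := by
        refine Finset.sum_le_sum fun s hs => ?_
        have h := Real.log_le_sub_one_of_pos (div_pos (hd s hs) hc)
        rw [Real.log_div (hd s hs).ne' hc.ne'] at h
        linarith
    _ = #t * Real.log c + ((∑ s ∈ t, d s) / c - #t) := by
        simp [Finset.sum_add_distrib, Finset.sum_sub_distrib, Finset.sum_div]
    _ ≤ #t * Real.log c := by
        have h : (∑ s ∈ t, d s) / c ≤ #t := (div_le_iff₀ hc).mpr hsum
        linarith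

/-- Let `n ≥ m ≥ k ≥ 1`, `p ≥ 1`, and let `B₁, …, B_p` be `m × n`
complex matrices each satisfying `Bᵢ Bᵢᴴ = I`.  Then for every `ε > 0` the minimum over
all `k`-element column subsets `s` of
`(1/(n·p)) ∑ᵢ log det (ε • I + (Bᵢ)ₛᴴ (Bᵢ)ₛ)` is at most
`(1/n) log C(m,k) − (1/n) log C(n,k) + 2√ε`. -/
theorem min_avg_log_det_le
    (n m k p : ℕ) (hk : 1 ≤ k) (hkm : k ≤ m) (hmn : m ≤ n) (hp : 1 ≤ p)
    (B : Fin p → Matrix (Fin m) (Fin n) ℂ) (hB : ∀ i, B i * (B i)ᴴ = 1)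
    (ε : ℝ) (hε : 0 < ε) :
    (Finset.univ.powersetCard k).inf'
        (Finset.powersetCard_nonempty.mpr (by simpa using hkm.trans hmn))
        (fun s => (1 / ((n : ℝ) * p)) * ∑ i : Fin p,
          Real.log (((ε : ℂ) • 1 +
            (colSubmatrix (B i) s)ᴴ * colSubmatrix (B i) s).det.re))
      ≤ (1 / (n : ℝ)) * Real.log (m.choose k) - (1 / (n : ℝ)) * Real.log (n.choose k)
        + 2 * Real.sqrt ε := by
  set t : Finset (Finset (Fin n)) := Finset.univ.powersetCard k
  have hcard : #t = n.choose k := by simp [t]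
  have hn : (0 : ℝ) < n := by exact_mod_cast hk.trans (hkm.trans hmn)
  have hp' : (0 : ℝ) < p := by exact_mod_cast hp
  have hN : (0 : ℝ) < n.choose k := by exact_mod_cast Nat.choose_pos (hkm.trans hmn)
  have hM : (0 : ℝ) < m.choose k := by exact_mod_cast Nat.choose_pos hkm
  set c : ℝ := m.choose k * Real.exp (2 * n * √ε) / n.choose k with hc_def
  have hc : 0 < c := by positivity
  have hlog : Real.log c =
      Real.log (m.choose k) - Real.log (n.choose k) + 2 * n * √ε := by
    rw [hc_def, Real.log_div (by positivity) hN.ne', Real.log_mul hM.ne' (by positivity),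
      Real.log_exp]
    ring
  have hone (i : Fin p) : ∑ s ∈ t, Real.log (((ε : ℂ) • 1 +
      (colSubmatrix (B i) s)ᴴ * colSubmatrix (B i) s).det.re) ≤ #t * Real.log c := by
    refine sum_log_le_card_mul_log t _ hc
      (fun s _ => det_scalar_add_gram_colSubmatrix_re_pos (B i) s hε) ?_
    rw [hcard, hc_def, mul_div_cancel₀ _ hN.ne']
    exact sum_det_scalar_add_gram_colSubmatrix_le hkm hmn (hB i) hε.le
  refine le_of_mul_le_mul_left ?_ hN
  calc (n.choose k : ℝ) * _ = #t • _ := by rw [nsmul_eq_mul, hcard]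
    _ ≤ ∑ s ∈ t, (1 / ((n : ℝ) * p)) * ∑ i : Fin p,
          Real.log (((ε : ℂ) • 1 +
            (colSubmatrix (B i) s)ᴴ * colSubmatrix (B i) s).det.re) :=
        Finset.card_nsmul_le_sum _ _ _ fun s hs => Finset.inf'_le _ hs
    _ = (1 / ((n : ℝ) * p)) * ∑ i : Fin p, ∑ s ∈ t,
          Real.log (((ε : ℂ) • 1 +
            (colSubmatrix (B i) s)ᴴ * colSubmatrix (B i) s).det.re) := by
        rw [← Finset.mul_sum, Finset.sum_comm]
    _ ≤ (1 / ((n : ℝ) * p)) * ∑ _i : Fin p, #t * Real.log c := by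
        gcongr with i
        exact hone i
    _ = _ := by
        rw [hlog, hcard, Finset.sum_const, Finset.card_univ, Fintype.card_fin, nsmul_eq_mul]
        field_simp
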